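/- arXiv:2111.09022 — 6 statements merged into one kernel-verified Lean document; each statement's English description precedes it below -/
import Mathlib

section
/- For every finite alphabet Σ, every context-free language L over Σ, every subset Θ ⊆ Σ, and every natural number k, the Θ-preserving downward closure ↓_{Θ,k}L = {u | ∃ v ∈ L, u is a subword of v, π_Θ(u) = π_Θ(v), and |v|_Θ ≤ k} is a regular language. -/
/-!
The regularity of `↓_{Θ,k} L` is a well-quasi-ordering phenomenon. Order words by `u ≤_Θ v` iff `u` is a subword of `v` with the same projection onto `Θ`
(`ProjSublist`). By Higman's lemma, applied to the `Θ`-free blocks, this is a well-quasi-order on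
the words with at most `k` letters from `Θ` (`partiallyWellOrderedOn_countP_le`). It is compatible
with concatenation, and `K = ↓_{Θ,k} L` is a downward closed set of such words.

Such a set has finitely many left quotients (`finite_range_leftQuotient`). Otherwise there are words
`x₀, x₁, …` with distinct nonempty quotients, and, after passing to a `≤_Θ`-increasing subsequence,
the quotients strictly decrease. Choose `yₙ` in the `n`-th quotient but not in the next. Some
`i < j` satisfy `yᵢ ≤_Θ yⱼ`, so `yᵢ` lies in the `j`-th quotient, which is contained in the
`(i+1)`-st: a contradiction. The Myhill–Nerode theorem then gives regularity.
-/

/-- The order `≤_Θ`: `u` is a subword of `v` that has the same projection onto `Θ`. -/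
def ProjSublist {α : Type} (Θ : Set α) [DecidablePred (· ∈ Θ)] (u v : List α) : Prop :=
  u.Sublist v ∧ u.filter (· ∈ Θ) = v.filter (· ∈ Θ)

section

variable {α : Type} {Θ : Set α} [DecidablePred (· ∈ Θ)]

instance : IsPreorder (List α) (ProjSublist Θ) where
  refl u := ⟨List.Sublist.refl u, rfl⟩
  trans _ _ _ h₁ h₂ := ⟨h₁.1.trans h₂.1, h₁.2.trans h₂.2⟩

theorem ProjSublist.append {u u' v v' : List α} (h : ProjSublist Θ u v)
    (h' : ProjSublist Θ u' v') : ProjSublist Θ (u ++ u') (v ++ v') :=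
  ⟨h.1.append h'.1, by rw [List.filter_append, List.filter_append, h.2, h'.2]⟩

theorem projSublist_of_countP_eq_zero {u v : List α} (h : u.Sublist v)
    (hv : v.countP (· ∈ Θ) = 0) : ProjSublist Θ u v := by
  have hu : u.countP (· ∈ Θ) = 0 := Nat.le_zero.1 (hv ▸ h.countP_le)
  rw [List.countP_eq_length_filter, List.length_eq_zero_iff] at hu hv
  exact ⟨h, hu.trans hv.symm⟩

theorem countP_eq_zero_or_exists_split (w : List α) :
    w.countP (· ∈ Θ) = 0 ∨
      ∃ p t s, w = p ++ t :: s ∧ p.countP (· ∈ Θ) = 0 ∧ t ∈ Θ := by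
  induction w with
  | nil => simp
  | cons a w ih =>
    by_cases ha : a ∈ Θ
    · exact Or.inr ⟨[], a, w, by simp, by simp, ha⟩
    · rcases ih with h | ⟨p, t, s, rfl, hp, ht⟩
      · exact Or.inl (by simpa [List.countP_cons, ha] using h)
      · exact Or.inr ⟨a :: p, t, s, by simp, by simpa [List.countP_cons, ha] using hp, ht⟩

/-- **Higman's lemma** for words without letters from `Θ`. -/
theorem partiallyWellOrderedOn_countP_eq_zero [Finite α] :
    {w : List α | w.countP (· ∈ Θ) = 0}.PartiallyWellOrderedOn (ProjSublist Θ) := by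
  have higman := Set.PartiallyWellOrderedOn.partiallyWellOrderedOn_sublistForall₂
    (α := α) (· = ·) (s := Set.univ) Set.finite_univ.partiallyWellOrderedOn
  rw [Set.partiallyWellOrderedOn_iff_exists_lt] at higman ⊢
  intro f hf
  obtain ⟨m, n, hmn, h⟩ := higman f (by simp)
  obtain ⟨l, hl, hsub⟩ := List.sublistForall₂_iff.1 h
  rw [List.forall₂_eq_eq_eq] at hl
  subst hl
  exact ⟨m, n, hmn, projSublist_of_countP_eq_zero hsub (hf n)⟩

/-- By induction on `k`: a word with between `1` and `k + 1` letters from `Θ` consists of a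
`Θ`-free block, a letter, and a word with at most `k` letters from `Θ`. -/
theorem partiallyWellOrderedOn_countP_le [Finite α] (k : ℕ) :
    {w : List α | w.countP (· ∈ Θ) ≤ k}.PartiallyWellOrderedOn (ProjSublist Θ) := by
  induction k with
  | zero => simpa only [Nat.le_zero] using partiallyWellOrderedOn_countP_eq_zero
  | succ k ih =>
    have letters : (Set.univ : Set α).PartiallyWellOrderedOn (· = ·) :=
      Set.finite_univ.partiallyWellOrderedOn
    have split := (partiallyWellOrderedOn_countP_eq_zero (Θ := Θ)).prod (letters.prod ih)
    have glued := split.image_of_monotone_on (r' := ProjSublist Θ)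
      (f := fun x : List α × α × List α => x.1 ++ ([x.2.1] ++ x.2.2)) (by
        rintro ⟨p, t, s⟩ - ⟨p', t', s'⟩ - ⟨hp, ht, hs⟩
        obtain rfl : t = t' := ht
        exact hp.append ((refl_of (ProjSublist Θ) [t]).append hs))
    refine (partiallyWellOrderedOn_countP_eq_zero.union glued).mono fun w hw => ?_
    rcases countP_eq_zero_or_exists_split (Θ := Θ) w with h | ⟨p, t, s, rfl, hp, ht⟩
    · exact Or.inl h
    · refine Or.inr ⟨(p, t, s), ⟨hp, trivial, ?_⟩, rfl⟩
      have : p.countP (· ∈ Θ) + (s.countP (· ∈ Θ) + 1) ≤ k + 1 := by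
        simpa [List.countP_cons, ht] using hw
      change s.countP (· ∈ Θ) ≤ k
      omega

/-- A downward closed set of words with at most `k` letters from `Θ` has finitely many left
quotients. -/
theorem finite_range_leftQuotient [Finite α] {k : ℕ} {K : Language α}
    (hcount : ∀ v ∈ K, v.countP (· ∈ Θ) ≤ k)
    (hdown : ∀ u v, ProjSublist Θ u v → v ∈ K → u ∈ K) :
    (Set.range K.leftQuotient).Finite := by
  by_contra hinf
  have hinf' : (Set.range K.leftQuotient \ {0}).Infinite :=
    Set.Infinite.sdiff hinf (Set.finite_singleton _)
  let e := hinf'.natEmbedding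
  choose x hx using fun n => (e n).2.1
  have hxinj : ∀ m n, K.leftQuotient (x m) = K.leftQuotient (x n) → m = n := fun m n h =>
    e.injective (Subtype.ext ((hx m).symm.trans (h.trans (hx n))))
  have hxcount : ∀ n, x n ∈ {w : List α | w.countP (· ∈ Θ) ≤ k} := fun n => by
    -- The quotient by `x n` is nonempty, so `x n` is a prefix of a word of `K`.
    obtain ⟨y, hy⟩ : ∃ y, y ∈ ((e n : Language α) : Set (List α)) :=
      Set.nonempty_iff_ne_empty.2 (e n).2.2
    rw [← hx n] at hy
    have := hcount _ hy
    rw [List.countP_append] at this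
    exact (Nat.le_add_right _ _).trans this
  have hwqo := partiallyWellOrderedOn_countP_le (Θ := Θ) k
  obtain ⟨g, hg⟩ := hwqo.exists_monotone_subseq hxcount
  have hanti : ∀ m n, m ≤ n → ∀ y, x (g n) ++ y ∈ K → x (g m) ++ y ∈ K := fun m n hmn y hy =>
    hdown _ _ ((hg m n hmn).append (refl_of (ProjSublist Θ) y)) hy
  have hstrict : ∀ n, ∃ y, x (g n) ++ y ∈ K ∧ x (g (n + 1)) ++ y ∉ K := fun n => by
    by_contra! h
    have := hxinj _ _ (Set.Subset.antisymm (h : ∀ y, _) (hanti n (n + 1) n.le_succ))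
    exact absurd (g.injective this) n.succ_ne_self.symm
  choose y hy hy' using hstrict
  obtain ⟨i, j, hij, hle⟩ := hwqo.exists_lt (f := y) fun n => by
    have := hcount _ (hy n)
    rw [List.countP_append] at this
    exact (Nat.le_add_left _ _).trans this
  exact hy' i (hanti (i + 1) j hij _
    (hdown _ _ ((refl_of (ProjSublist Θ) (x (g j))).append hle) (hy j)))

end

/-- For every finite alphabet, every context-free language `L`,
every subset `Θ` of the alphabet, and every `k : ℕ`, the `Θ`-preserving downward
closure `↓_{Θ,k} L = {u | ∃ v ∈ L, u ⊑ v, π_Θ(u) = π_Θ(v), |v|_Θ ≤ k}` is regular. -/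
theorem statement0 {α : Type} [Fintype α] (L : Language α) (hL : L.IsContextFree)
    (Θ : Set α) [DecidablePred (· ∈ Θ)] (k : ℕ) :
    Language.IsRegular
      {u : List α | ∃ v ∈ L, u.Sublist v ∧
        u.filter (· ∈ Θ) = v.filter (· ∈ Θ) ∧
        v.countP (· ∈ Θ) ≤ k} := by
  refine Language.IsRegular.of_finite_range_leftQuotient
    (finite_range_leftQuotient (Θ := Θ) (k := k) ?_ ?_)
  · rintro u ⟨v, -, hsub, -, hk⟩
    exact hsub.countP_le.trans hk
  · rintro u u' h ⟨v, hv, hsub, hfilter, hk⟩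
    exact ⟨v, hv, h.1.trans hsub, h.2.trans hfilter, hk⟩
end

section
/- For every language L over a finite alphabet Σ (not necessarily regular or context-free), the downward closure ↓L = {u | ∃ v ∈ L, u is a subword of v} is a regular language. -/
/-!
Put `D = ↓L`. By the Myhill–Nerode theorem it suffices that `D` has finitely many left quotients
`x⁻¹D = {y | x ++ y ∈ D}`. Since `D` is closed under subwords, each quotient is closed under
subwords, and `x ⊑ x'` implies `x'⁻¹D ⊆ x⁻¹D`.

Higman's lemma (`wellQuasiOrdered_sublist`) is used twice. Given infinitely many distinct
quotients `xₙ⁻¹D`, it provides a subsequence along which the words `xₙ` increase, hence along which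
the quotients strictly decrease. But there is no infinite strictly decreasing sequence of
subword-closed languages (`not_strictAnti_of_sublist_closed`), because words
`yₙ ∈ Qₙ \ Qₙ₊₁` would satisfy `yₘ ⊑ yₙ` for some `m < n`, and then `yₘ ∈ Qₙ ⊆ Qₘ₊₁`.
-/

/-- **Higman's lemma** for the subword order over a finite alphabet. -/
theorem wellQuasiOrdered_sublist {α : Type*} [Finite α] :
    WellQuasiOrdered (List.Sublist : List α → List α → Prop) := by
  have h : (Set.univ : Set α).PartiallyWellOrderedOn (· = ·) :=
    Set.finite_univ.partiallyWellOrderedOn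
  intro f
  obtain ⟨m, n, hmn, hs⟩ :=
    (Set.PartiallyWellOrderedOn.partiallyWellOrderedOn_sublistForall₂ _ h)
      (fun n => ⟨f n, fun _ _ => Set.mem_univ _⟩)
  obtain ⟨l, hl, hs⟩ := List.sublistForall₂_iff.1 hs
  rw [List.forall₂_eq_eq_eq] at hl
  subst hl
  exact ⟨m, n, hmn, hs⟩

/-- Subword-closed languages over a finite alphabet satisfy the descending chain condition. -/
theorem not_strictAnti_of_sublist_closed {α : Type*} [Finite α] (Q : ℕ → Set (List α))
    (hQ : ∀ n u v, u.Sublist v → v ∈ Q n → u ∈ Q n) : ¬ StrictAnti Q := by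
  intro hanti
  have hex : ∀ n, ∃ y ∈ Q n, y ∉ Q (n + 1) := fun n =>
    Set.exists_of_ssubset (hanti n.lt_succ_self)
  choose y hy hy' using hex
  obtain ⟨m, n, hmn, hs⟩ := wellQuasiOrdered_sublist y
  exact hy' m (hQ _ _ _ hs (hanti.antitone (Nat.succ_le_of_lt hmn) (hy n)))

/-- For every language `L` over a finite alphabet (not necessarily
regular or context-free), the downward closure `↓L = {u | ∃ v ∈ L, u ⊑ v}` with
respect to the subword (scattered subsequence) order is regular. -/
theorem statement1 {α : Type} [Fintype α] (L : Language α) :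
    Language.IsRegular {u : List α | ∃ v ∈ L, u.Sublist v} := by
  set D : Language α := {u : List α | ∃ v ∈ L, u.Sublist v}
  have hD : ∀ u v : List α, u.Sublist v → v ∈ D → u ∈ D := by
    rintro u v huv ⟨w, hw, hvw⟩
    exact ⟨w, hw, huv.trans hvw⟩
  apply Language.IsRegular.of_finite_range_leftQuotient
  by_contra hinf
  have : Infinite (Set.range D.leftQuotient) := Set.infinite_coe_iff.2 hinf
  let q : ℕ ↪ Set.range D.leftQuotient := Infinite.natEmbedding _
  choose x hx using fun n => (q n).2
  have : IsPreorder (List α) List.Sublist :=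
    { refl := List.Sublist.refl, trans := fun _ _ _ => List.Sublist.trans }
  obtain ⟨g, hg⟩ := wellQuasiOrdered_sublist.exists_monotone_subseq x
  refine not_strictAnti_of_sublist_closed (fun n => D.leftQuotient (x (g n))) ?_ ?_
  · intro n u v huv hv
    exact hD _ _ (huv.append_left _) hv
  · apply Antitone.strictAnti_of_injective
    · intro m n hmn y hy
      exact hD _ _ ((hg m n hmn).append_right y) hy
    · intro m n hmn
      have hq : q (g m) = q (g n) := Subtype.ext ((hx _).symm.trans (Eq.trans hmn (hx _)))
      exact g.injective (q.injective hq)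
end

section
/- Let Σ be a finite alphabet, L a language over Σ, Θ ⊆ Σ, and K ∈ ℕ. Adjoin a fresh symbol # not in Σ and define L' = { w·#^l | w ∈ L, l ∈ ℕ, |w|_Θ + l = K } over Σ ∪ {#}. Then the image, under the homomorphism erasing all occurrences of #, of the language ↓L' ∩ { u | |u|_{Θ∪{#}} = K } equals ↓_{Θ,K}L. That is: { erase_#(u) | u ∈ (Σ∪{#})*, u is a subword of some word of L', and u contains exactly K occurrences of letters from Θ∪{#} } = { u ∈ Σ* | ∃ v ∈ L, u is a subword of v, π_Θ(u) = π_Θ(v), |v|_Θ ≤ K }. -/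
/-!
Every word of `L'` contains exactly `K` letters of `Θ ∪ {#}`, so a subword with `K` such letters has
dropped none of them. Such a subword of `w·#^l` splits as `u·#^m` with `u` a subword of `w` and
`m ≤ l`; since `|u|_Θ + m = K = |w|_Θ + l`, necessarily `|u|_Θ = |w|_Θ`, and a subword with the same
number of `Θ`-letters has the same projection onto `Θ`. Conversely, `u ∈ ↓_{Θ,K} L` witnessed by `v`
is the image of `u·#^(K - |v|_Θ)`.
-/

theorem countP_map_some_append_replicate_none {α : Type} (Θ : Set α) [DecidablePred (· ∈ Θ)]
    (u : List α) (m : ℕ) :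
    (u.map some ++ List.replicate m none : List (Option α)).countP
      (fun a : Option α => a.elim true (fun s => decide (s ∈ Θ))) = u.countP (· ∈ Θ) + m := by
  rw [List.countP_append, List.countP_map, List.countP_replicate]
  simp [Function.comp_def]

theorem filterMap_id_map_some_append_replicate_none {α : Type} (u : List α) (m : ℕ) :
    (u.map some ++ List.replicate m none : List (Option α)).filterMap id = u := by
  simp [List.filterMap_append, List.filterMap_map]

/-- Let `L` be a language over `α`, `Θ ⊆ α`, `K : ℕ`. Adjoin a fresh
symbol `#` (here `none` in `Option α`) and let
`L' = { w·#^l | w ∈ L, l : ℕ, |w|_Θ + l = K }`. Then the image under the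
`#`-erasing homomorphism (`List.filterMap id`) of `↓L' ∩ { u | |u|_{Θ∪{#}} = K }`
equals the `Θ`-preserving downward closure `↓_{Θ,K} L`. -/
theorem statement4 {α : Type} [Fintype α] (L : Language α)
    (Θ : Set α) [DecidablePred (· ∈ Θ)] (K : ℕ) :
    {u : List α | ∃ u' : List (Option α),
        (∃ v' ∈ {x : List (Option α) | ∃ w ∈ L, ∃ l : ℕ,
            x = w.map some ++ List.replicate l none ∧ w.countP (· ∈ Θ) + l = K},
          u'.Sublist v') ∧
        u'.countP (fun a => a.elim true (fun s => decide (s ∈ Θ))) = K ∧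
        u = u'.filterMap id}
      =
    {u : List α | ∃ v ∈ L, u.Sublist v ∧
        u.filter (· ∈ Θ) = v.filter (· ∈ Θ) ∧
        v.countP (· ∈ Θ) ≤ K} := by
  ext u
  simp only [Set.mem_ofPred_eq]
  constructor
  · rintro ⟨u', ⟨v', ⟨w, hw, l, rfl, hK⟩, hsub⟩, hcount, rfl⟩
    obtain ⟨a, b, rfl, ha, hb⟩ := List.sublist_append_iff.mp hsub
    obtain ⟨u, hu, rfl⟩ := List.sublist_map_iff.mp ha
    obtain ⟨m, hm, rfl⟩ := List.sublist_replicate_iff.mp hb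
    rw [countP_map_some_append_replicate_none] at hcount
    rw [filterMap_id_map_some_append_replicate_none]
    have hle : u.countP (· ∈ Θ) ≤ w.countP (· ∈ Θ) := hu.countP_le
    refine ⟨w, hw, hu, (hu.filter _).eq_of_length ?_, by omega⟩
    rw [← List.countP_eq_length_filter, ← List.countP_eq_length_filter]
    omega
  · rintro ⟨v, hv, hsub, hfilter, hK⟩
    have hcount : u.countP (· ∈ Θ) = v.countP (· ∈ Θ) := by
      rw [List.countP_eq_length_filter, List.countP_eq_length_filter, hfilter]
    refine ⟨u.map some ++ List.replicate (K - v.countP (· ∈ Θ)) none,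
      ⟨_, ⟨v, hv, K - v.countP (· ∈ Θ), rfl, by omega⟩,
        (hsub.map some).append (List.Sublist.refl _)⟩, ?_, ?_⟩
    · rw [countP_map_some_append_replicate_none]
      omega
    · rw [filterMap_id_map_some_append_replicate_none]
end

section
/- For every n ∈ ℕ, consider the language L_n = { w ++ reverse(w) | w ∈ {a,b}*, |w| = 2^n } over a two-letter alphabet. Every NFA with a finite state type σ that accepts the downward closure ↓L_n = { u | ∃ w with |w| = 2^n, u is a subword of w ++ reverse(w) } satisfies 2^(2^n) ≤ (card σ) · 2^n, i.e., it has at least 2^(2^n)/2^n states. -/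
/-!
Write `N = 2 ^ n`. A subword of length `2N` of a word of length `2N` is that word, so the words of
length `2N` in the downward closure are exactly the palindromes `w ++ w.reverse` with `|w| = N`.
Hence the pairs `(w, w.reverse)`, `|w| = N`, form a fooling set: `w ++ v.reverse` is in the closure
only if `w = v`. Choosing for each `w` the state reached after `w` on an accepting run over
`w ++ w.reverse` therefore gives an injection from words of length `N` into the states, which
yields the stronger bound `2 ^ N ≤ card σ`.
-/

/-- An accepting run over `x ++ y` passes through some state `q` after reading `x`. -/
lemma NFA.append_mem_accepts_iff {α σ : Type*} (M : NFA α σ) (x y : List α) :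
    x ++ y ∈ M.accepts ↔ ∃ q ∈ M.eval x, ∃ s ∈ M.accept, s ∈ M.evalFrom {q} y := by
  have h : M.evalFrom (M.eval x) y = ⋃ q ∈ M.eval x, M.evalFrom {q} y :=
    M.evalFrom_eq_biUnion_singleton _ y
  rw [NFA.mem_accepts, NFA.evalFrom_append]
  change (∃ s ∈ M.accept, s ∈ M.evalFrom (M.eval x) y) ↔ _
  rw [h]
  simp only [Set.mem_iUnion, exists_prop]
  tauto

/-- For every `n : ℕ`, consider
`L_n = { w ++ reverse w | w ∈ {a,b}*, |w| = 2^n }` over a two-letter alphabet.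
Every NFA with finite state type `σ` accepting the downward closure
`↓L_n = { u | ∃ w, |w| = 2^n ∧ u ⊑ w ++ reverse w }` satisfies
`2^(2^n) ≤ card σ · 2^n`, i.e. it has at least `2^(2^n)/2^n` states. -/
theorem statement6 (n : ℕ) (σ : Type) [Fintype σ] (M : NFA (Fin 2) σ)
    (hM : M.accepts =
      {u : List (Fin 2) | ∃ w : List (Fin 2),
        w.length = 2 ^ n ∧ u.Sublist (w ++ w.reverse)}) :
    2 ^ (2 ^ n) ≤ Fintype.card σ * 2 ^ n := by
  have hmem : ∀ u, u ∈ M.accepts ↔ ∃ w : List (Fin 2),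
      w.length = 2 ^ n ∧ u.Sublist (w ++ w.reverse) := fun u => by rw [hM]; rfl
  have hrun : ∀ w : List.Vector (Fin 2) (2 ^ n), ∃ q ∈ M.eval w.1,
      ∃ s ∈ M.accept, s ∈ M.evalFrom {q} w.1.reverse := fun w =>
    (M.append_mem_accepts_iff _ _).1 ((hmem _).2 ⟨w.1, w.2, List.Sublist.refl _⟩)
  choose f hf hacc using hrun
  have hinj : Function.Injective f := by
    intro w v hwv
    -- Splice the first half of the run for `w` with the second half of the run for `v`.
    have hsplice : w.1 ++ v.1.reverse ∈ M.accepts :=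
      (M.append_mem_accepts_iff _ _).2 ⟨f w, hf w, by rw [hwv]; exact hacc v⟩
    obtain ⟨x, hx, hsub⟩ := (hmem _).1 hsplice
    have heq := hsub.eq_of_length (by simp [hx, w.2, v.2])
    obtain ⟨h1, h2⟩ := List.append_inj heq (by rw [w.2, hx])
    exact Subtype.ext (h1.trans (List.reverse_injective h2).symm)
  have hcard := Fintype.card_le_of_injective f hinj
  rw [card_vector, Fintype.card_fin] at hcard
  exact hcard.trans (Nat.le_mul_of_pos_right _ (by positivity))
end

section
/- For every n ≥ 1, every NFA with a finite state type σ over a two-letter alphabet that accepts the language { w ++ reverse(w) | w ∈ {a,b}*, 2·|w| ≤ 2^n } of even-length palindromes of length at most 2^n has at least 2^(2^(n-1)) states, i.e., 2^(2^(n-1)) ≤ card σ. -/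
/-!
The proof is a fooling-set argument. For each word `w` of length `2^(n-1)` fix an accepting run
on `w ++ w.reverse` and let `q w` be its state after reading the prefix `w`. If `q v = q w`, the
first half of the run for `v` can be spliced with the second half of the run for `w`, so
`v ++ w.reverse` is accepted; being an even-length palindrome whose halves are `v` and `w.reverse`,
it forces `v = w`. Hence `q` is injective on the `2^(2^(n-1))` words of length `2^(n-1)`.
-/

/-- An even-length palindrome cut in the middle determines its two halves. -/
theorem eq_of_append_reverse_eq {α : Type*} {x y w : List α} (hxy : x.length = y.length)
    (h : x ++ y.reverse = w ++ w.reverse) : x = y := by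
  have hlen := congrArg List.length h
  simp only [List.length_append, List.length_reverse] at hlen
  obtain ⟨hx, hy⟩ := List.append_inj h (by omega)
  rw [hx, List.reverse_injective hy]

/-- For every `n ≥ 1`, every NFA with finite state type `σ` over a
two-letter alphabet that accepts the language of even-length palindromes of length
at most `2^n`, `{ w ++ reverse w | 2·|w| ≤ 2^n }`, has at least `2^(2^(n-1))` states. -/
theorem statement7 (n : ℕ) (hn : 1 ≤ n) (σ : Type) [Fintype σ] (M : NFA (Fin 2) σ)
    (hM : M.accepts =
      {u : List (Fin 2) | ∃ w : List (Fin 2),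
        u = w ++ w.reverse ∧ 2 * w.length ≤ 2 ^ n}) :
    2 ^ (2 ^ (n - 1)) ≤ Fintype.card σ := by
  have hmem : ∀ u : List (Fin 2), (∃ s ∈ M.accept, s ∈ M.evalFrom M.start u) ↔
      ∃ w : List (Fin 2), u = w ++ w.reverse ∧ 2 * w.length ≤ 2 ^ n := fun u =>
    Set.ext_iff.mp hM u
  have hpow : 2 * 2 ^ (n - 1) = 2 ^ n := by
    rw [← pow_succ', Nat.sub_add_cancel hn]
  have hstate : ∀ v : List.Vector (Fin 2) (2 ^ (n - 1)), ∃ t ∈ M.evalFrom M.start v.toList,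
      ∃ s ∈ M.accept, s ∈ M.evalFrom {t} v.toList.reverse := by
    intro v
    obtain ⟨s, hs, hsv⟩ := (hmem _).mpr ⟨v.toList, rfl, by rw [v.toList_length, hpow]⟩
    rw [NFA.evalFrom_append, NFA.mem_evalFrom_iff_exists] at hsv
    obtain ⟨t, ht, hst⟩ := hsv
    exact ⟨t, ht, s, hs, hst⟩
  choose q hq hacc using hstate
  have hinj : Function.Injective q := by
    intro v w hvw
    obtain ⟨s, hs, hsw⟩ := hacc w
    have hsplice : s ∈ M.evalFrom M.start (v.toList ++ w.toList.reverse) := by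
      rw [NFA.evalFrom_append, NFA.mem_evalFrom_iff_exists]
      exact ⟨q v, hq v, hvw ▸ hsw⟩
    obtain ⟨u, hu, -⟩ := (hmem _).mp ⟨s, hs, hsplice⟩
    exact List.Vector.toList_injective
      (eq_of_append_reverse_eq (by rw [v.toList_length, w.toList_length]) hu)
  have hcard := Fintype.card_le_of_injective q hinj
  rwa [card_vector, Fintype.card_fin] at hcard
end

section
/- For every language L over a finite alphabet Σ, there exists a finite set F of words over Σ such that the complement of the downward closure of L is exactly the upward closure of F with respect to the subword order: Σ* \ ↓L = { v | ∃ u ∈ F, u is a subword of v }. -/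
/-!
The complement `C` of a downward closure is upward closed in the subword order. Every word of `C`
has a subword in `C` that is minimal, because a proper subword is strictly shorter, so `C` is the
upward closure of its set of minimal words. Minimal words are pairwise incomparable, and by
Higman's lemma (`Set.PartiallyWellOrderedOn.partiallyWellOrderedOn_sublistForall₂`, applied to
equality on the finite alphabet) the subword order has no infinite antichain.
-/

/-- Higman's lemma for a finite alphabet: the subword order has no infinite antichain. -/
lemma finite_of_isAntichain_sublist {α : Type} [Finite α] {s : Set (List α)}
    (hs : IsAntichain List.Sublist s) : s.Finite := by
  have hpwo := Set.PartiallyWellOrderedOn.partiallyWellOrderedOn_sublistForall₂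
    (α := α) (· = ·) (s := Set.univ) Set.finite_univ.partiallyWellOrderedOn
  have heq : List.SublistForall₂ (α := α) (· = ·) = List.Sublist := by
    ext u v
    simp [List.sublistForall₂_iff, List.forall₂_eq_eq_eq]
  rw [heq] at hpwo
  exact hs.finite_of_partiallyWellOrderedOn (hpwo.mono fun _ _ _ _ => Set.mem_univ _)

/-- Every word of `C` lies above a minimal word of `C`. -/
lemma exists_minimal_sublist {α : Type} {C : Set (List α)} {v : List α} (hv : v ∈ C) :
    ∃ u ∈ C, (∀ w ∈ C, w.Sublist u → w = u) ∧ u.Sublist v := by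
  -- A shortest subword of `v` in `C` is minimal.
  obtain ⟨u, ⟨huC, huv⟩, hmin⟩ := exists_minimalFor_of_wellFoundedLT
    (fun u : List α => u ∈ C ∧ u.Sublist v) List.length ⟨v, hv, List.Sublist.refl v⟩
  exact ⟨u, huC, fun w hw hwu =>
    hwu.eq_of_length_le (hmin ⟨hw, hwu.trans huv⟩ hwu.length_le), huv⟩

/-- For every language `L` over a finite alphabet, there is a
finite set `F` of words such that the complement of the downward closure of `L`
is exactly the upward closure of `F` in the subword order. -/
theorem statement9 {α : Type} [Fintype α] (L : Language α) :
    ∃ F : Finset (List α),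
      {u : List α | ∃ v ∈ L, u.Sublist v}ᶜ =
        {v : List α | ∃ u ∈ F, List.Sublist u v} := by
  set C : Set (List α) := {u : List α | ∃ v ∈ L, u.Sublist v}ᶜ with hC
  have hfin : {u : List α | u ∈ C ∧ ∀ w ∈ C, w.Sublist u → w = u}.Finite :=
    finite_of_isAntichain_sublist fun u hu w hw hne huw => hne (hw.2 u hu.1 huw)
  refine ⟨hfin.toFinset, Set.Subset.antisymm (fun v hv => ?_) ?_⟩
  · obtain ⟨u, huC, hmin, huv⟩ := exists_minimal_sublist hv
    exact ⟨u, hfin.mem_toFinset.2 ⟨huC, hmin⟩, huv⟩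
  · rintro v ⟨u, hu, huv⟩ ⟨x, hx, hvx⟩
    exact (hfin.mem_toFinset.1 hu).1 ⟨x, hx, huv.trans hvx⟩
end
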